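/- Let k be a field of characteristic zero and X = {1, 2} with 1 ≺ 2. In the free algebra k⟨X⟩, for all i, j ≥ 0: SH_{i,j}(E(2), E(1)) = Σ ((i+j)! / (t₁!⋯tₙ!)) · ∏_{m=1}^{n} (C(α_m)·E(α_m) / |α_m|!)^{t_m}, where the sum is over all n ≥ 0, all strictly decreasing tuples α₁ ≻ α₂ ≻ ⋯ ≻ αₙ of Lyndon words over X, and all tuples of positive integers (t₁, …, tₙ) such that Σ_{m=1}^{n} t_m·α_m(2) = i and Σ_{m=1}^{n} t_m·α_m(1) = j, and the product ∏_{m=1}^{n} is taken in this decreasing order of the α_m. -/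

import Mathlib

/-- A nonempty word over a linearly ordered alphabet is a Lyndon word if it is
strictly lexicographically smaller than every nontrivial rotation of itself
(vacuously true for single letters). -/
def IsLyndon {X : Type*} [LinearOrder X] (w : List X) : Prop :=
  w ≠ [] ∧ ∀ u v : List X, u ≠ [] → v ≠ [] → w = u ++ v → List.Lex (· < ·) w (v ++ u)

/-- The shuffle type polynomials `SH_{i,j}(u,v)`: the sum of all products of `i`
copies of `u` and `j` copies of `v`. -/
def SH {A : Type*} [Ring A] (u v : A) : ℕ → ℕ → A
  | 0, 0 => 1
  | i + 1, 0 => u * SH u v i 0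
  | 0, j + 1 => v * SH u v 0 j
  | i + 1, j + 1 => u * SH u v i (j + 1) + v * SH u v (i + 1) j

/-!
Let `P(l)` be multiplication by `E(l)` combined with a shift by the content of `l`, acting on power
series in commuting variables `T_x` truncated at a monomial, and let `H` be the degree operator.
Put `c_l = C(l) / |l|!` and, for a final segment `B` of the decreasing list of Lyndon words of
length at most `N`, let `Q_B = ∑ |l| c_l P(l)` over the words `l` of `B` that have no other suffix
in `B`.

Moving `exp (c_b P(b))` past `P(l)`, for a standard pair `(l, b)`, produces the iterated brackets
`[[l, b], …, b]`, and these are the `P(l bʳ)` since `(l bʳ, b)` is again a standard pair. If `b` is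
not a suffix of `l`, the recursion for `C` reads `|l bʳ| c_{l bʳ} = |l| c_l · c_bʳ / r!`. Hence
`(H - Q_{b :: B}) exp (c_b P(b)) = exp (c_b P(b)) (H - Q_B)`, and composing over all Lyndon words
gives `(H - ∑ₓ P(x)) F = F H` for the decreasing product `F` of the exponentials. Applied to the
series `1`, this says that the coefficients `f` of `F 1` satisfy `|m| f(m) = ∑ₓ E(x) f(m - x)`,
which up to the factor `|m|!` is the recursion defining the shuffle type polynomials.
-/

section Words

variable {X : Type*}

theorem isSuffix_append_iff {v l b : List X} :
    v <:+ l ++ b ↔ v <:+ b ∨ ∃ v', v' ≠ [] ∧ v' <:+ l ∧ v = v' ++ b := by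
  constructor
  · rintro ⟨u, huv⟩
    rcases List.append_eq_append_iff.1 huv with ⟨a, rfl, rfl⟩ | ⟨a, rfl, rfl⟩
    · rcases eq_or_ne a [] with rfl | ha
      · exact .inl ⟨[], rfl⟩
      · exact .inr ⟨a, ha, ⟨u, rfl⟩, rfl⟩
    · exact .inl ⟨a, rfl⟩
  · rintro (h | ⟨v', -, ⟨u, rfl⟩, rfl⟩)
    · exact h.trans (List.suffix_append l b)
    · exact ⟨u, (List.append_assoc u v' b).symm⟩

/-- The word `l bʳ`, that is, `l` followed by `r` copies of `b`. It is the shape of the iterated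
right bracketings `[[[l, b], b], …, b]`. -/
def appendPow (l b : List X) (r : ℕ) : List X :=
  l ++ (List.replicate r b).flatten

@[simp]
theorem appendPow_zero (l b : List X) : appendPow l b 0 = l := by
  simp [appendPow]

theorem appendPow_succ (l b : List X) (r : ℕ) : appendPow l b (r + 1) = appendPow l b r ++ b := by
  simp [appendPow, List.replicate_succ']

theorem length_appendPow (l b : List X) (r : ℕ) :
    (appendPow l b r).length = l.length + r * b.length := by
  simp [appendPow]

theorem exists_eq_appendPow {b : List X} (hb : b ≠ []) (l : List X) :
    ∃ l₀ r, l = appendPow l₀ b r ∧ ¬ b <:+ l₀ := by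
  by_cases hbl : b <:+ l
  · obtain ⟨u, hu⟩ := hbl
    have hlength : u.length < l.length := by simp [← hu, List.length_pos_iff.2 hb]
    obtain ⟨l₀, r, rfl, hl₀⟩ := exists_eq_appendPow hb u
    exact ⟨l₀, r + 1, by rw [appendPow_succ, hu], hl₀⟩
  · exact ⟨l, 0, (appendPow_zero l b).symm, hbl⟩
termination_by l.length

theorem appendPow_inj {b l l' : List X} (hl : ¬ b <:+ l) (hl' : ¬ b <:+ l') {r r' : ℕ}
    (h : appendPow l b r = appendPow l' b r') : l = l' ∧ r = r' := by
  induction r generalizing r' with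
  | zero =>
    cases r' with
    | zero => simpa using h
    | succ r' => exact absurd ⟨_, by rw [← appendPow_succ, ← h, appendPow_zero]⟩ hl
  | succ r ih =>
    cases r' with
    | zero => exact absurd ⟨_, by rw [← appendPow_succ, h, appendPow_zero]⟩ hl'
    | succ r' =>
      rw [appendPow_succ, appendPow_succ] at h
      simpa using ih (List.append_cancel_right h)

/-- The word `α₁^{t₁} ⋯ αₙ^{tₙ}` encoded by the list of pairs `(αₘ, tₘ)`. -/
def spell (L : List (List X × ℕ)) : List X :=
  (L.map fun p => (List.replicate p.2 p.1).flatten).flatten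

@[simp]
theorem spell_nil : spell ([] : List (List X × ℕ)) = [] := rfl

theorem spell_cons (p : List X × ℕ) (L : List (List X × ℕ)) :
    spell (p :: L) = (List.replicate p.2 p.1).flatten ++ spell L := by
  simp [spell]

theorem spell_concat (L : List (List X × ℕ)) (b : List X) (t : ℕ) :
    spell (L ++ [(b, t)]) = appendPow (spell L) b t := by
  simp [spell, appendPow]

theorem mul_length_le_length_spell {L : List (List X × ℕ)} {p : List X × ℕ}
    (hp : p ∈ L) : p.2 * p.1.length ≤ (spell L).length := by
  have hsub : (List.replicate p.2 p.1).flatten.Sublist (spell L) :=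
    List.sublist_flatten_of_mem (List.mem_map_of_mem hp)
  simpa using hsub.length_le

theorem count_spell [DecidableEq X] (L : List (List X × ℕ)) (x : X) :
    (spell L).count x = (L.map fun p => p.2 * p.1.count x).sum := by
  simp [spell, List.count_flatten, Function.comp_def]

variable [LinearOrder X]

theorem append_lt_append_left_iff {a b c : List X} : a ++ b < a ++ c ↔ b < c :=
  StrictMono.lt_iff_lt (f := (a ++ ·)) fun _ _ => List.append_left_lt

theorem self_le_append (a b : List X) : a ≤ a ++ b := by
  cases b with
  | nil => simp
  | cons x b => simpa using (append_lt_append_left_iff (a := a)).2 (List.nil_lt_cons x b) |>.le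

theorem isPrefix_or_append_lt_append {a b : List X} (h : a < b) :
    a <+: b ∨ ∀ c d : List X, a ++ c < b ++ d := by
  change List.Lex (· < ·) a b at h
  induction h with
  | nil => exact .inl List.nil_prefix
  | cons _ ih =>
    exact ih.imp (List.prefix_cons_inj _).2 fun hlt c d => List.Lex.cons (hlt c d)
  | rel hxy => exact .inr fun _ _ => List.Lex.rel hxy

theorem append_lt_append_of_length_le {a b : List X} (h : a < b) (hlen : b.length ≤ a.length)
    (c d : List X) : a ++ c < b ++ d := by
  refine (isPrefix_or_append_lt_append h).resolve_left (fun hp => h.ne ?_) c d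
  exact hp.eq_of_length_le hlen

theorem IsLyndon.lt_of_isSuffix {w v : List X} (h : IsLyndon w) (hv : v ≠ []) (hvw : v <:+ w)
    (hne : v ≠ w) : w < v := by
  obtain ⟨u, rfl⟩ := hvw
  have hu : u ≠ [] := by rintro rfl; exact hne rfl
  have hrot : u ++ v < v ++ u := h.2 u v hu hv rfl
  by_contra! hle
  rcases isPrefix_or_append_lt_append (hle.lt_of_ne hne) with ⟨t, ht⟩ | hlt
  · -- If `u v = v t`, then `t < u` makes the rotation `t v` smaller than `u v`.
    have hlen : u.length = t.length := by simpa [add_comm] using congrArg List.length ht.symm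
    have htu : t < u := append_lt_append_left_iff.1 (ht ▸ hrot)
    have ht0 : t ≠ [] := by rintro rfl; exact hu (List.length_eq_zero_iff.1 hlen)
    have hrot' : u ++ v < t ++ v := h.2 v t hv ht0 ht.symm
    exact hrot'.asymm (append_lt_append_of_length_le htu hlen.le v v)
  · exact hrot.asymm (by simpa using hlt u [])

theorem isLyndon_iff_lt_of_isSuffix {w : List X} :
    IsLyndon w ↔ w ≠ [] ∧ ∀ v, v ≠ [] → v <:+ w → v ≠ w → w < v := by
  refine ⟨fun h => ⟨h.1, fun v => h.lt_of_isSuffix⟩, fun ⟨hw, h⟩ => ⟨hw, ?_⟩⟩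
  rintro u v hu hv rfl
  exact (h v hv (List.suffix_append u v) (by simpa using hu)).trans_le (self_le_append _ _)

theorem IsLyndon.le_of_isSuffix {w v : List X} (h : IsLyndon w) (hv : v ≠ []) (hvw : v <:+ w) :
    w ≤ v := by
  rcases eq_or_ne v w with rfl | hne
  · exact le_rfl
  · exact (h.lt_of_isSuffix hv hvw hne).le

theorem isLyndon_singleton (x : X) : IsLyndon [x] := by
  refine isLyndon_iff_lt_of_isSuffix.2 ⟨List.cons_ne_nil _ _, fun v hv hvx hne => ?_⟩
  exact absurd (List.suffix_cons_iff.1 hvx) (by simp [hv, hne])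

theorem IsLyndon.append_lt_right {l m : List X} (hm : IsLyndon m) (hl : l ≠ []) (h : l < m) :
    l ++ m < m := by
  rcases isPrefix_or_append_lt_append h with ⟨t, rfl⟩ | hlt
  · have ht : t ≠ [] := by rintro rfl; simp at h
    exact append_lt_append_left_iff.2
      (hm.lt_of_isSuffix ht (List.suffix_append l t) (by simpa using hl))
  · simpa using hlt m []

theorem IsLyndon.append {l m : List X} (hl : IsLyndon l) (hm : IsLyndon m) (h : l < m) :
    IsLyndon (l ++ m) := by
  have hlm := hm.append_lt_right hl.1 h
  refine isLyndon_iff_lt_of_isSuffix.2 ⟨by simp [hl.1], fun v hv hvw hne => ?_⟩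
  rcases isSuffix_append_iff.1 hvw with hvm | ⟨v', hv', hvl, rfl⟩
  · exact hlm.trans_le (hm.le_of_isSuffix hv hvm)
  · have hlv : l < v' := hl.lt_of_isSuffix hv' hvl (by rintro rfl; exact hne rfl)
    exact append_lt_append_of_length_le hlv hvl.length_le m m

theorem IsLyndon.appendPow_lt {l m : List X} (hm : IsLyndon m) (hl : l ≠ []) (h : l < m) (r : ℕ) :
    appendPow l m r < m := by
  induction r with
  | zero => simpa using h
  | succ r ih =>
    rw [appendPow_succ]
    exact hm.append_lt_right (by simp [appendPow, hl]) ih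

theorem exists_isLyndon_isSuffix_le {w : List X} (hw : w ≠ []) :
    ∃ v, IsLyndon v ∧ v <:+ w ∧ ∀ u, u ≠ [] → u <:+ w → v ≤ u := by
  obtain ⟨v, hv, hmin⟩ :=
    Finset.exists_min_image (w.tails.toFinset.filter (· ≠ [])) id ⟨w, by simp [hw]⟩
  simp only [Finset.mem_filter, List.mem_toFinset, List.mem_tails, id, and_imp] at hv hmin
  refine ⟨v, isLyndon_iff_lt_of_isSuffix.2 ⟨hv.2, fun u hu huv hne => ?_⟩, hv.1,
    fun u hu huw => hmin u huw hu⟩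
  exact (hmin u (huv.trans hv.1) hu).lt_of_ne hne.symm

/-- `(l, b)` is the standard factorization of the Lyndon word `l ++ b`. Maximality of `b` among the
proper Lyndon suffixes is expressed by `le_of_isSuffix`; see
`IsStandardPair.length_le_of_isLyndon`. -/
structure IsStandardPair (l b : List X) : Prop where
  left : IsLyndon l
  right : IsLyndon b
  lt : l < b
  le_of_isSuffix : ∀ v, v ≠ [] → v <:+ l → v ≠ l → b ≤ v

namespace IsStandardPair

variable {l b : List X}

theorem isLyndon_append (h : IsStandardPair l b) : IsLyndon (l ++ b) :=
  h.left.append h.right h.lt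

theorem length_le_of_isLyndon (h : IsStandardPair l b) {u v : List X} (huv : l ++ b = u ++ v)
    (hu : u ≠ []) (hv : IsLyndon v) : v.length ≤ b.length := by
  rcases isSuffix_append_iff.1 ⟨u, huv.symm⟩ with hvb | ⟨v', hv', hvl, rfl⟩
  · exact hvb.length_le
  · have hne : v' ≠ l := by rintro rfl; exact hu (by simpa using huv)
    have hlt : v' ++ b < b :=
      hv.lt_of_isSuffix h.right.1 (List.suffix_append v' b) (by simpa using hv')
    exact absurd (hlt.trans_le (h.le_of_isSuffix v' hv' hvl hne)) (self_le_append _ _).not_gt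

theorem append (h : IsStandardPair l b) : IsStandardPair (l ++ b) b where
  left := h.isLyndon_append
  right := h.right
  lt := h.right.append_lt_right h.left.1 h.lt
  le_of_isSuffix v hv hvw hne := by
    rcases isSuffix_append_iff.1 hvw with hvb | ⟨v', hv', hvl, rfl⟩
    · exact h.right.le_of_isSuffix hv hvb
    · exact (h.le_of_isSuffix v' hv' hvl (by rintro rfl; exact hne rfl)).trans (self_le_append _ _)

theorem of_append (h : IsStandardPair (l ++ b) b) : IsStandardPair l b := by
  have hl : l ≠ [] := by rintro rfl; exact h.lt.false
  have hlb : l < b := (self_le_append _ _).trans_lt h.lt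
  have hsuffix : ∀ v, v ≠ [] → v <:+ l → v ≠ l → b ≤ v := by
    rintro v hv ⟨u, rfl⟩ hne
    have hle : b ≤ v ++ b :=
      h.le_of_isSuffix _ (by simp [hv]) ⟨u, by simp⟩ fun he => hne (List.append_cancel_right he)
    by_contra! hvb
    exact (h.right.append_lt_right hv hvb).not_ge hle
  refine ⟨isLyndon_iff_lt_of_isSuffix.2 ⟨hl, fun v hv hvl hne => ?_⟩, h.right, hlb, hsuffix⟩
  exact hlb.trans_le (hsuffix v hv hvl hne)

theorem appendPow (h : IsStandardPair l b) (r : ℕ) : IsStandardPair (appendPow l b r) b := by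
  induction r with
  | zero => simpa using h
  | succ r ih => rw [appendPow_succ]; exact ih.append

theorem of_appendPow {r : ℕ} (h : IsStandardPair (_root_.appendPow l b r) b) :
    IsStandardPair l b := by
  induction r with
  | zero => simpa using h
  | succ r ih => rw [appendPow_succ] at h; exact ih h.of_append

end IsStandardPair

/-- The list of pairs `(αₘ, tₘ)` has strictly decreasing Lyndon words `αₘ` and positive
multiplicities `tₘ`, so that it is the Chen–Fox–Lyndon factorization of `spell L`. -/
structure IsLyndonFactorization (L : List (List X × ℕ)) : Prop where
  isLyndon : ∀ p ∈ L, IsLyndon p.1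
  pos : ∀ p ∈ L, 1 ≤ p.2
  pairwise : L.Pairwise fun p q => q.1 < p.1

theorem isLyndonFactorization_iff {L : List (List X × ℕ)} :
    IsLyndonFactorization L ↔ (∀ p ∈ L, IsLyndon p.1 ∧ 1 ≤ p.2) ∧
      L.IsChain fun p q => List.Lex (· < ·) q.1 p.1 := by
  have : IsTrans (List X × ℕ) fun p q => List.Lex (· < ·) q.1 p.1 :=
    ⟨fun p q r hqp hrq => lt_trans (α := List X) hrq hqp⟩
  rw [List.isChain_iff_pairwise, forall₂_and]
  exact ⟨fun h => ⟨⟨h.isLyndon, h.pos⟩, h.pairwise⟩, fun h => ⟨h.1.1, h.1.2, h.2⟩⟩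

namespace IsLyndonFactorization

theorem nil : IsLyndonFactorization ([] : List (List X × ℕ)) :=
  ⟨by simp, by simp, .nil⟩

theorem concat {L : List (List X × ℕ)} (hL : IsLyndonFactorization L) {b : List X} {t : ℕ}
    (hb : IsLyndon b) (ht : 1 ≤ t) (hlt : ∀ p ∈ L, b < p.1) :
    IsLyndonFactorization (L ++ [(b, t)]) where
  isLyndon := by simpa [or_imp, forall_and] using ⟨fun w s h => hL.isLyndon (w, s) h, hb⟩
  pos := by simpa [or_imp, forall_and] using ⟨fun w s h => hL.pos (w, s) h, ht⟩
  pairwise := by simpa [List.pairwise_append, hL.pairwise] using fun w s h => hlt (w, s) h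

theorem exists_isSuffix_spell_le {L : List (List X × ℕ)} (hL : IsLyndonFactorization L)
    (hL0 : L ≠ []) : ∃ q ∈ L, q.1 <:+ spell L ∧ ∀ p ∈ L, q.1 ≤ p.1 := by
  obtain ⟨L', ⟨b, t⟩, rfl⟩ := (List.eq_nil_or_concat L).resolve_left hL0
  rw [List.concat_eq_append] at hL ⊢
  obtain ⟨s, rfl⟩ := Nat.exists_eq_add_of_le' (hL.pos (b, t) (by simp))
  refine ⟨(b, s + 1), by simp, ?_, fun p hp => ?_⟩
  · rw [spell_concat, appendPow_succ]
    exact List.suffix_append _ _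
  · rcases List.mem_append.1 hp with hp | hp
    · exact ((List.pairwise_append.1 hL.pairwise).2.2 p hp _ (by simp)).le
    · simp [List.mem_singleton.1 hp]

theorem spell_eq_nil_iff {L : List (List X × ℕ)} (hL : IsLyndonFactorization L) :
    spell L = [] ↔ L = [] := by
  refine ⟨fun h => by_contra fun hL0 => ?_, fun h => by simp [h]⟩
  obtain ⟨q, hq, hsuffix, -⟩ := hL.exists_isSuffix_spell_le hL0
  exact (hL.isLyndon q hq).1 (by simpa [h] using hsuffix)

end IsLyndonFactorization

theorem exists_isLyndonFactorization (w : List X) :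
    ∃ L, IsLyndonFactorization L ∧ spell L = w := by
  rcases eq_or_ne w [] with rfl | hw
  · exact ⟨[], .nil, rfl⟩
  obtain ⟨v, hv, hvw, hmin⟩ := exists_isLyndon_isSuffix_le hw
  obtain ⟨u, t, rfl, hvu⟩ := exists_eq_appendPow hv.1 w
  have ht : 1 ≤ t := by
    by_contra! ht
    obtain rfl : t = 0 := by omega
    exact hvu (by simpa using hvw)
  have hlength : u.length < (appendPow u v t).length := by
    have := Nat.mul_pos ht (List.length_pos_iff.2 hv.1)
    rw [length_appendPow]; omega
  obtain ⟨L, hL, rfl⟩ := exists_isLyndonFactorization u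
  refine ⟨L ++ [(v, t)], hL.concat hv ht fun p hp => ?_, spell_concat L v t⟩
  obtain ⟨q, hq, hqu, hqle⟩ := hL.exists_isSuffix_spell_le (List.ne_nil_of_mem hp)
  refine lt_of_lt_of_le ?_ (hqle p hp)
  by_contra! hle
  have hq0 := (hL.isLyndon q hq).1
  have hqv : q.1 < v := hle.lt_of_ne fun h => hvu (h ▸ hqu)
  refine (hv.appendPow_lt hq0 hqv t).not_ge (hmin _ (by simp [appendPow, hq0]) ?_)
  obtain ⟨a, ha⟩ := hqu
  exact ⟨a, by rw [← ha, appendPow, appendPow, List.append_assoc]⟩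
termination_by w.length

theorem IsStandardPair.exists_isLyndonFactorization_gt {x : X} {w b : List X}
    (h : IsStandardPair (x :: w) b) (hb : ¬ b <:+ x :: w) :
    ∃ L, IsLyndonFactorization L ∧ spell L = w ∧ ∀ p ∈ L, b < p.1 := by
  obtain ⟨L, hL, rfl⟩ := exists_isLyndonFactorization w
  refine ⟨L, hL, rfl, fun p hp => ?_⟩
  obtain ⟨q, hq, hsuffix, hqle⟩ := hL.exists_isSuffix_spell_le (List.ne_nil_of_mem hp)
  have hqx : q.1 <:+ x :: spell L := hsuffix.trans (List.suffix_cons x _)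
  have hne : q.1 ≠ x :: spell L := fun he => by simpa [he] using hsuffix.length_le
  have hle : b ≤ q.1 := h.le_of_isSuffix q.1 (hL.isLyndon q hq).1 hqx hne
  exact (hle.lt_of_ne fun he => hb (he ▸ hqx)).trans_le (hqle p hp)

end Words

section LyndonWords

variable {X : Type*} [LinearOrder X]

/-- The words of `B` of which no other word of `B` is a suffix. When `B` is what remains of
`lyndonWords X N` below a word `b`, these are the `l` such that `(l, b)` is a standard pair, see
`mem_suffixMinimal`. -/
def suffixMinimal (B : List (List X)) : Finset (List X) :=
  B.toFinset.filter fun l => ∀ v ∈ B, v <:+ l → v = l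

@[simp]
theorem suffixMinimal_nil : suffixMinimal ([] : List (List X)) = ∅ := rfl

variable (X) [Finite X]

theorem finite_setOf_isLyndon_length_le (N : ℕ) :
    {l : List X | IsLyndon l ∧ l.length ≤ N}.Finite :=
  (List.finite_length_le X N).subset fun _ hl => hl.2

/-- The Lyndon words of length at most `N`, in decreasing order. -/
noncomputable def lyndonWords (N : ℕ) : List (List X) :=
  (finite_setOf_isLyndon_length_le X N).toFinset.sort (· ≥ ·)

variable {X} {N : ℕ}

theorem mem_lyndonWords {l : List X} : l ∈ lyndonWords X N ↔ IsLyndon l ∧ l.length ≤ N := by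
  simp [lyndonWords]

theorem pairwise_lyndonWords : (lyndonWords X N).Pairwise (· > ·) :=
  (Finset.sortedGT_sort _).pairwise

theorem sublist_lyndonWords_iff {B : List (List X)} :
    B.Sublist (lyndonWords X N) ↔
      B.Pairwise (· > ·) ∧ ∀ b ∈ B, IsLyndon b ∧ b.length ≤ N := by
  refine ⟨fun h => ⟨pairwise_lyndonWords.sublist h, fun b hb => mem_lyndonWords.1 (h.subset hb)⟩,
    fun ⟨hpairwise, hmem⟩ => ?_⟩
  refine List.sublist_of_subperm_of_pairwise (List.Nodup.subperm ?_ fun b hb => ?_) hpairwise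
    pairwise_lyndonWords
  · exact hpairwise.imp ne_of_gt
  · exact mem_lyndonWords.2 (hmem b hb)

section FinalSegment

variable {b : List X} {B : List (List X)}

theorem isLyndon_of_cons_isSuffix (h : b :: B <:+ lyndonWords X N) : IsLyndon b :=
  (mem_lyndonWords.1 (h.subset List.mem_cons_self)).1

theorem mem_iff_of_cons_isSuffix (h : b :: B <:+ lyndonWords X N) {l : List X} :
    l ∈ B ↔ IsLyndon l ∧ l.length ≤ N ∧ l < b := by
  have hsorted := pairwise_lyndonWords.sublist h.sublist
  rw [← and_assoc, ← mem_lyndonWords]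
  refine ⟨fun hl => ⟨h.subset (List.mem_cons_of_mem b hl), (List.pairwise_cons.1 hsorted).1 l hl⟩,
    fun ⟨hl, hlb⟩ => ?_⟩
  obtain ⟨A, hA⟩ := h
  rw [← hA, List.mem_append, List.mem_cons] at hl
  rcases hl with hlA | rfl | hlB
  · have hbl : b < l := by
      have := pairwise_lyndonWords (X := X) (N := N)
      rw [← hA] at this
      exact (List.pairwise_append.1 this).2.2 l hlA b List.mem_cons_self
    exact absurd hlb hbl.asymm
  · exact absurd hlb (lt_irrefl l)
  · exact hlB

end FinalSegment

theorem suffixMinimal_lyndonWords [Fintype X] (hN : 1 ≤ N) :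
    suffixMinimal (lyndonWords X N) = Finset.univ.image fun x : X => [x] := by
  ext l
  have hsingleton (x : X) : [x] ∈ lyndonWords X N :=
    mem_lyndonWords.2 ⟨isLyndon_singleton x, by simpa using hN⟩
  simp only [suffixMinimal, Finset.mem_filter, List.mem_toFinset, Finset.mem_image,
    Finset.mem_univ, true_and]
  constructor
  · rintro ⟨hl, hmin⟩
    obtain ⟨u, x, rfl⟩ :=
      (List.eq_nil_or_concat l).resolve_left (mem_lyndonWords.1 hl).1.1
    exact ⟨x, hmin [x] (hsingleton x) (by simp)⟩
  · rintro ⟨x, rfl⟩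
    refine ⟨hsingleton x, fun v hv hvx => hvx.eq_of_length_le ?_⟩
    exact List.length_pos_iff.2 (mem_lyndonWords.1 hv).1.1

section FinalSegment

variable {b : List X} {B : List (List X)}

theorem mem_suffixMinimal (h : b :: B <:+ lyndonWords X N) {l : List X} :
    l ∈ suffixMinimal B ↔ IsStandardPair l b ∧ l.length ≤ N := by
  simp only [suffixMinimal, Finset.mem_filter, List.mem_toFinset]
  constructor
  · rintro ⟨hlB, hmin⟩
    obtain ⟨hl, hlN, hlb⟩ := (mem_iff_of_cons_isSuffix h).1 hlB
    refine ⟨⟨hl, isLyndon_of_cons_isSuffix h, hlb, fun v hv hvl hne => ?_⟩, hlN⟩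
    by_contra! hvb
    obtain ⟨u, hu, huv, hule⟩ := exists_isLyndon_isSuffix_le hv
    have huB : u ∈ B := (mem_iff_of_cons_isSuffix h).2
      ⟨hu, (huv.trans hvl).length_le.trans hlN, (hule v hv v.suffix_refl).trans_lt hvb⟩
    exact hne (hvl.eq_of_length_le (hmin u huB (huv.trans hvl) ▸ huv.length_le))
  · rintro ⟨hl, hlN⟩
    refine ⟨(mem_iff_of_cons_isSuffix h).2 ⟨hl.left, hlN, hl.lt⟩, fun v hv hvl => ?_⟩
    obtain ⟨hv, -, hvb⟩ := (mem_iff_of_cons_isSuffix h).1 hv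
    by_contra hne
    exact (hl.le_of_isSuffix v hv.1 hvl hne).not_gt hvb

theorem suffixMinimal_cons (h : b :: B <:+ lyndonWords X N) :
    suffixMinimal (b :: B) = insert b ((suffixMinimal B).filter fun l => ¬ b <:+ l) := by
  ext l
  simp only [suffixMinimal, Finset.mem_filter, Finset.mem_insert, List.mem_toFinset, List.mem_cons,
    forall_eq_or_imp]
  constructor
  · rintro ⟨rfl | hl, hbl, hmin⟩
    · exact .inl rfl
    · refine .inr ⟨⟨hl, hmin⟩, fun hsuffix => ?_⟩
      exact ((mem_iff_of_cons_isSuffix h).1 hl).2.2.ne' (hbl hsuffix)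
  · rintro (rfl | ⟨⟨hl, hmin⟩, hbl⟩)
    · refine ⟨.inl rfl, fun _ => rfl, fun v hv hvl => ?_⟩
      obtain ⟨hv, -, hvlt⟩ := (mem_iff_of_cons_isSuffix h).1 hv
      exact absurd hvlt ((isLyndon_of_cons_isSuffix h).le_of_isSuffix hv.1 hvl).not_gt
    · exact ⟨.inr hl, fun hsuffix => absurd hsuffix hbl, hmin⟩

theorem sum_suffixMinimal (h : b :: B <:+ lyndonWords X N) {M : Type*} [AddCommMonoid M]
    {g : List X → M} (hg : ∀ l, N < l.length → g l = 0) :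
    ∑ l ∈ suffixMinimal B, g l =
      ∑ l ∈ suffixMinimal B with ¬ b <:+ l, ∑ r ∈ Finset.range (N + 1), g (appendPow l b r) := by
  have hb := isLyndon_of_cons_isSuffix h
  rw [← Finset.sum_product',
    ← Finset.sum_image (f := g) (g := fun q : List X × ℕ => appendPow q.1 b q.2)]
  · refine Finset.sum_subset (fun l hl => ?_) fun l hl hl' => hg l ?_
    · obtain ⟨hlb, hlN⟩ := (mem_suffixMinimal h).1 hl
      obtain ⟨l₀, r, rfl, hl₀⟩ := exists_eq_appendPow hb.1 l
      rw [length_appendPow] at hlN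
      have hr : r ≤ r * b.length := Nat.le_mul_of_pos_right r (List.length_pos_iff.2 hb.1)
      have hmem : l₀ ∈ suffixMinimal B :=
        (mem_suffixMinimal h).2 ⟨hlb.of_appendPow, le_of_add_le_left hlN⟩
      simp only [Finset.mem_image, Finset.mem_product, Finset.mem_filter, Finset.mem_range]
      exact ⟨(l₀, r), ⟨⟨hmem, hl₀⟩, by omega⟩, rfl⟩
    · obtain ⟨⟨l₀, r⟩, hq, rfl⟩ := Finset.mem_image.1 hl
      rw [Finset.mem_product, Finset.mem_filter] at hq
      by_contra! hlN
      exact hl' ((mem_suffixMinimal h).2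
        ⟨((mem_suffixMinimal h).1 hq.1.1).1.appendPow r, hlN⟩)
  · rintro ⟨l, r⟩ hl ⟨l', r'⟩ hl' heq
    simp only [Finset.coe_product, Set.mem_prod, Finset.mem_coe, Finset.mem_filter] at hl hl'
    exact Prod.ext_iff.2 (appendPow_inj hl.1.2 hl'.1.2 heq)

end FinalSegment

end LyndonWords

section Coefficients

variable {X : Type*} [LinearOrder X] {k : Type*} [Field k]

theorem list_prod_map_div {ι M : Type*} [DivisionCommMonoid M] (L : List ι) (f g : ι → M) :
    (L.map fun i => f i / g i).prod = (L.map f).prod / (L.map g).prod := by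
  simpa using Multiset.prod_map_div (m := (L : Multiset ι)) (f := f) (g := g)

/-- `C` satisfies the recursion defining the coefficients `C(α)` of Lyndon words. -/
structure IsLyndonCoeff (C : List X → k) : Prop where
  singleton : ∀ x, C [x] = 1
  cons : ∀ x w L, IsLyndon (x :: w) → w ≠ [] → IsLyndonFactorization L → spell L = w →
    C (x :: w) = (w.length.factorial : k) /
        (L.map fun p => (p.1.length.factorial : k) ^ p.2 * (p.2.factorial : k)).prod *
      (L.map fun p => C p.1 ^ p.2).prod

/-- The normalized coefficient `C(α) / |α|!`. -/
def normCoeff (C : List X → k) (l : List X) : k :=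
  C l / (l.length.factorial : k)

namespace IsLyndonCoeff

variable [CharZero k] {C : List X → k}

theorem length_mul_normCoeff_cons (hC : IsLyndonCoeff C) {x : X} {L : List (List X × ℕ)}
    (hx : IsLyndon (x :: spell L)) (hL : IsLyndonFactorization L) :
    ((x :: spell L).length : k) * normCoeff C (x :: spell L) =
      (L.map fun p => normCoeff C p.1 ^ p.2 / (p.2.factorial : k)).prod := by
  rcases eq_or_ne (spell L) [] with hw | hw
  · simp [hL.spell_eq_nil_iff.1 hw, normCoeff, hC.singleton]
  have hprod : (L.map fun p => normCoeff C p.1 ^ p.2 / (p.2.factorial : k)).prod =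
      (L.map fun p => C p.1 ^ p.2).prod /
        (L.map fun p => (p.1.length.factorial : k) ^ p.2 * (p.2.factorial : k)).prod := by
    simp only [normCoeff, div_pow, div_div, list_prod_map_div]
  have hlength : ((spell L).length : k) + 1 ≠ 0 := Nat.cast_add_one_ne_zero _
  have hfactorial : ((spell L).length.factorial : k) ≠ 0 :=
    Nat.cast_ne_zero.2 (Nat.factorial_ne_zero _)
  rw [hprod, normCoeff, hC.cons x _ L hx hw hL rfl, List.length_cons, Nat.factorial_succ]
  push_cast
  field_simp

theorem length_mul_normCoeff_appendPow (hC : IsLyndonCoeff C) {l b : List X}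
    (hlb : IsStandardPair l b) (hb : ¬ b <:+ l) (r : ℕ) :
    ((appendPow l b r).length : k) * normCoeff C (appendPow l b r) =
      (l.length : k) * normCoeff C l * (normCoeff C b ^ r / (r.factorial : k)) := by
  obtain ⟨x, w, rfl⟩ := List.exists_cons_of_ne_nil hlb.left.1
  obtain ⟨L, hL, rfl, hlt⟩ := hlb.exists_isLyndonFactorization_gt hb
  rcases Nat.eq_zero_or_pos r with rfl | hr
  · simp
  have hcons : appendPow (x :: spell L) b r = x :: spell (L ++ [(b, r)]) := by
    simp [spell_concat, appendPow]
  rw [hcons, hC.length_mul_normCoeff_cons (hcons ▸ (hlb.appendPow r).left)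
    (hL.concat hlb.right hr hlt), hC.length_mul_normCoeff_cons hlb.left hL]
  simp

end IsLyndonCoeff

end Coefficients

section Exponential

open IsNilpotent

variable {R : Type*} [Ring R] [Algebra ℚ R] {a : R}

theorem exp_mulLeft_apply (ha : IsNilpotent a) (x : R) :
    exp (LinearMap.mulLeft ℚ a) x = exp a * x := by
  rw [← LinearMap.mulLeft_apply ℚ]
  exact (LinearMap.congr_fun (map_exp ha (Algebra.lmul ℚ R)) x).symm

theorem exp_mulRight_apply (ha : IsNilpotent a) (x : R) :
    exp (LinearMap.mulRight ℚ a) x = x * exp a := by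
  obtain ⟨n, hn⟩ := ha
  have hn' : LinearMap.mulRight ℚ a ^ n = 0 := by
    rw [LinearMap.pow_mulRight, hn, LinearMap.mulRight_zero_eq_zero]
  simp [exp_eq_sum hn, exp_eq_sum hn', LinearMap.pow_mulRight, Finset.mul_sum]

-- Right multiplication by `a` is the sum of left multiplication by `a` and of the commuting
-- derivation `⁅·, a⁆`, whose powers send `y 0` to `y r`.
theorem mul_exp_of_mul_eq (ha : IsNilpotent a) {y : ℕ → R} {K : ℕ}
    (hy : ∀ r, y r * a = a * y r + y (r + 1)) (hK : y K = 0) :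
    y 0 * exp a = exp a * ∑ r ∈ Finset.range K, (r.factorial : ℚ)⁻¹ • y r := by
  set ℓ := LinearMap.mulLeft ℚ a
  set δ := LinearMap.mulRight ℚ a - ℓ with hδ
  have hℓ : IsNilpotent ℓ := (LinearMap.isNilpotent_mulLeft_iff ℚ a).2 ha
  have hright : IsNilpotent (LinearMap.mulRight ℚ a) :=
    (LinearMap.isNilpotent_mulRight_iff ℚ a).2 ha
  have hcomm : Commute ℓ (LinearMap.mulRight ℚ a) := LinearMap.commute_mulLeft_right a a
  have hδnil : IsNilpotent δ := hcomm.symm.isNilpotent_sub hright hℓ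
  have hpow (r : ℕ) : (δ ^ r) (y 0) = y r := by
    induction r with
    | zero => simp
    | succ r ih =>
      rw [pow_succ', Module.End.mul_apply, ih]
      simp [hδ, ℓ, hy]
  calc y 0 * exp a = exp (ℓ + δ) (y 0) := by rw [hδ, add_sub_cancel, exp_mulRight_apply ha]
    _ = exp a * exp δ (y 0) := by
      rw [exp_add_of_commute (hcomm.sub_right (Commute.refl ℓ)) hℓ hδnil, Module.End.mul_apply,
        exp_mulLeft_apply ha]
    _ = exp a * ∑ r ∈ Finset.range K, (r.factorial : ℚ)⁻¹ • y r := by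
      have := exp_smul_eq_sum (a := δ) (m := y 0) (k := K) (by simp [hpow, hK]) hδnil
      simp only [Module.End.smul_def, hpow] at this
      rw [this]

theorem mul_exp_of_mul_eq_add_nsmul (ha : IsNilpotent a) {H : R} {n : ℕ}
    (h : H * a = a * H + n • a) : H * exp a = exp a * (H + n • a) := by
  have := mul_exp_of_mul_eq ha (y := fun r => if r = 0 then H else if r = 1 then n • a else 0)
    (K := 2) (fun r => ?_) (by simp)
  · simpa [Finset.sum_range_succ] using this
  · rcases r with - | - | r <;> simp [h, mul_assoc, (Nat.cast_commute n a).left_comm]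

end Exponential

section Intertwining

open IsNilpotent

variable {X : Type*} [LinearOrder X] {R : Type*} [Ring R]

/-- `E` satisfies the recursion of the Lyndon–Shirshov elements: it takes standard factorizations
to commutators. -/
def IsLyndonBracket (E : List X → R) : Prop :=
  ∀ l b, IsStandardPair l b → E (l ++ b) = E l * E b - E b * E l

/-- A bracketing family `P` of nilpotent elements, vanishing on words longer than `N`, such that
`P l` has degree `|l|` for the degree operator `H`. -/
structure IsGradedBracket (P : List X → R) (H : R) (N : ℕ) : Prop where
  isLyndonBracket : IsLyndonBracket P
  eq_zero : ∀ l, N < l.length → P l = 0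
  isNilpotent : ∀ l, l ≠ [] → IsNilpotent (P l)
  degree : ∀ l, H * P l = P l * H + l.length • P l

variable {k : Type*} [Field k] [Algebra k R]

/-- The sum `∑ |l| C(l) / |l|! • P l` over the suffix-minimal words of `B`. Subtracting it from the
degree operator has the effect of conjugating by the product of the exponentials of the words of
`B`, see `IsGradedBracket.sub_suffixSum_mul_prod_exp`. -/
def suffixSum (C : List X → k) (P : List X → R) (B : List (List X)) : R :=
  ∑ l ∈ suffixMinimal B, ((l.length : k) * normCoeff C l) • P l

namespace IsGradedBracket

variable {C : List X → k} {P : List X → R} {H : R} {N : ℕ}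
  {b l : List X} {B : List (List X)} [Algebra ℚ R]

theorem mul_exp {S : Type*} [CommRing S] [Algebra S R] (hP : IsGradedBracket P H N)
    (h : IsStandardPair l b) (c : S) :
    P l * exp (c • P b) = exp (c • P b) *
      ∑ r ∈ Finset.range (N + 1), (r.factorial : ℚ)⁻¹ • c ^ r • P (appendPow l b r) := by
  have hnil : IsNilpotent (c • P b) := (hP.isNilpotent b h.right.1).smul c
  have hN : N < (appendPow l b (N + 1)).length := by
    have := Nat.le_mul_of_pos_right (N + 1) (List.length_pos_iff.2 h.right.1)
    rw [length_appendPow]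
    omega
  have := mul_exp_of_mul_eq hnil (y := fun r => c ^ r • P (appendPow l b r)) (K := N + 1)
    (fun r => ?_) (by simp [hP.eq_zero _ hN])
  · simpa using this
  · rw [appendPow_succ, hP.isLyndonBracket _ _ (h.appendPow r), _root_.pow_succ, mul_smul, smul_sub,
      smul_sub]
    simp only [smul_mul_assoc, mul_smul_comm]
    rw [smul_comm c (c ^ r), add_sub_cancel]

variable [CharZero k]

theorem smul_mul_exp (hP : IsGradedBracket P H N) (hC : IsLyndonCoeff C) (h : IsStandardPair l b)
    (hb : ¬ b <:+ l) :
    ((l.length : k) * normCoeff C l) • P l * exp (normCoeff C b • P b) =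
      exp (normCoeff C b • P b) * ∑ r ∈ Finset.range (N + 1),
        (((appendPow l b r).length : k) * normCoeff C (appendPow l b r)) •
          P (appendPow l b r) := by
  rw [smul_mul_assoc, hP.mul_exp h, ← mul_smul_comm, Finset.smul_sum]
  congr! 2 with r
  rw [hC.length_mul_normCoeff_appendPow h hb, inv_natCast_smul_eq ℚ k, smul_smul, smul_smul]
  ring_nf

variable [Finite X]

theorem sub_suffixSum_cons_mul_exp (hP : IsGradedBracket P H N) (hC : IsLyndonCoeff C)
    (h : b :: B <:+ lyndonWords X N) :
    (H - suffixSum C P (b :: B)) * exp (normCoeff C b • P b) =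
      exp (normCoeff C b • P b) * (H - suffixSum C P B) := by
  set a := normCoeff C b • P b with ha
  have hnil : IsNilpotent a :=
    (hP.isNilpotent b (isLyndon_of_cons_isSuffix h).1).smul (normCoeff C b)
  have hdegree : H * exp a = exp a * (H + b.length • a) := by
    refine mul_exp_of_mul_eq_add_nsmul hnil ?_
    rw [ha, mul_smul_comm, hP.degree, smul_add, smul_mul_assoc, smul_comm]
  have hb : ((b.length : k) * normCoeff C b) • P b * exp a = exp a * b.length • a := by
    rw [mul_smul, Nat.cast_smul_eq_nsmul, ← ha]
    have hcomm : b.length • a * a = a * b.length • a := by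
      rw [smul_mul_assoc, mul_smul_comm b.length]
    simpa using mul_exp_of_mul_eq_add_nsmul hnil (n := 0) (by simpa using hcomm)
  have hsum : (∑ l ∈ suffixMinimal B with ¬ b <:+ l,
      ((l.length : k) * normCoeff C l) • P l) * exp a = exp a * suffixSum C P B := by
    rw [suffixSum, sum_suffixMinimal h fun l hl => by rw [hP.eq_zero l hl, smul_zero],
      Finset.sum_mul, Finset.mul_sum]
    refine Finset.sum_congr rfl fun l hl => ?_
    rw [Finset.mem_filter] at hl
    exact hP.smul_mul_exp hC ((mem_suffixMinimal h).1 hl.1).1 hl.2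
  rw [suffixSum, suffixMinimal_cons h, Finset.sum_insert (by simp), sub_mul, add_mul, hdegree, hb,
    hsum]
  noncomm_ring

theorem sub_suffixSum_mul_prod_exp (hP : IsGradedBracket P H N) (hC : IsLyndonCoeff C)
    (h : B <:+ lyndonWords X N) :
    (H - suffixSum C P B) * (B.map fun b => exp (normCoeff C b • P b)).prod =
      (B.map fun b => exp (normCoeff C b • P b)).prod * H := by
  induction B with
  | nil => simp [suffixSum]
  | cons b B ih =>
    rw [List.map_cons, List.prod_cons, ← mul_assoc, hP.sub_suffixSum_cons_mul_exp hC h, mul_assoc,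
      ih ((List.suffix_cons b B).trans h), mul_assoc]

end IsGradedBracket

end Intertwining

section Shift

variable {X : Type*} {A : Type*} [Ring A] (k : Type*) [CommRing k] [Algebra k A]

/-- The degree operator on truncated power series. -/
def degreeOp (A : Type*) [Ring A] [Algebra k A] (m : Multiset X) :
    Module.End k (Set.Iic m → A) where
  toFun f p := p.1.card • f p
  map_add' f g := by ext p; simp
  map_smul' c f := by ext p; simp

theorem degreeOp_apply {m : Multiset X} (f : Set.Iic m → A) (p : Set.Iic m) :
    degreeOp k A m f p = p.1.card • f p :=
  rfl

variable [DecidableEq X]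

/-- Multiplication by the monomial `a T^v` of a power series in the commuting variables
`(T_x)_{x : X}` with coefficients in `A`, of which only the coefficients of the `T^p` with `p ≤ m`
are kept, so that `shift k m v a` is nilpotent for `v ≠ 0`. -/
def shift (m v : Multiset X) : A →ₗ[k] Module.End k (Set.Iic m → A) where
  toFun a :=
    { toFun := fun f p =>
        if v ≤ p.1 then a * f ⟨p.1 - v, Set.mem_Iic.2 (tsub_le_self.trans p.2)⟩ else 0
      map_add' := fun f g => by ext p; by_cases h : v ≤ p.1 <;> simp [h, mul_add]
      map_smul' := fun c f => by ext p; by_cases h : v ≤ p.1 <;> simp [h] }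
  map_add' a b := LinearMap.ext fun f => funext fun p => by
    by_cases h : v ≤ p.1 <;> simp [h, add_mul]
  map_smul' c a := LinearMap.ext fun f => funext fun p => by by_cases h : v ≤ p.1 <;> simp [h]

/-- The truncated power series `1`. -/
def vacuum (A : Type*) [Ring A] (m : Multiset X) : Set.Iic m → A :=
  fun p => if p.1 = 0 then 1 else 0

variable {k} {m v w : Multiset X} {a b : A}

theorem shift_apply (f : Set.Iic m → A) (p : Set.Iic m) :
    shift k m v a f p =
      if v ≤ p.1 then a * f ⟨p.1 - v, Set.mem_Iic.2 (tsub_le_self.trans p.2)⟩ else 0 :=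
  rfl

theorem shift_mul_shift : shift k m v a * shift k m w b = shift k m (v + w) (a * b) := by
  refine LinearMap.ext fun f => funext fun p => ?_
  rw [Module.End.mul_apply, shift_apply, shift_apply, shift_apply]
  by_cases hv : v ≤ p.1
  · simp [hv, le_tsub_iff_left, tsub_tsub, mul_assoc]
  · have hvw : ¬ v + w ≤ p.1 := fun h => hv (le_of_add_le_left h)
    simp [hv, hvw]

theorem shift_zero_one : shift k m 0 (1 : A) = 1 := by
  refine LinearMap.ext fun f => funext fun p => ?_
  simp [shift_apply]

theorem shift_pow (n : ℕ) : shift k m v a ^ n = shift k m (n • v) (a ^ n) := by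
  induction n with
  | zero => simp [shift_zero_one]
  | succ n ih => rw [pow_succ, ih, shift_mul_shift, succ_nsmul, pow_succ]

theorem shift_eq_zero (h : ¬ v ≤ m) : shift k m v a = 0 := by
  refine LinearMap.ext fun f => funext fun p => ?_
  have hp : ¬ v ≤ p.1 := fun hvp => h (hvp.trans p.2)
  simp [shift_apply, hp]

theorem shift_pow_eq_zero (hv : v ≠ 0) : shift k m v a ^ (m.card + 1) = 0 := by
  rw [shift_pow]
  refine shift_eq_zero fun h => ?_
  have := Multiset.card_le_card h
  have := Nat.le_mul_of_pos_right (m.card + 1) (Multiset.card_pos.2 hv)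
  rw [Multiset.card_nsmul] at *
  omega

theorem degreeOp_mul_shift :
    degreeOp k A m * shift k m v a = shift k m v a * degreeOp k A m + v.card • shift k m v a := by
  refine LinearMap.ext fun f => funext fun p => ?_
  by_cases hv : v ≤ p.1
  · have hcard : (p.1 - v).card + v.card = p.1.card := by
      rw [Multiset.card_sub hv, Nat.sub_add_cancel (Multiset.card_le_card hv)]
    simp only [Module.End.mul_apply, LinearMap.add_apply, LinearMap.smul_apply, Pi.add_apply,
      Pi.smul_apply, shift_apply, degreeOp_apply, if_pos hv]
    rw [← hcard, add_smul, mul_smul_comm]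
  · simp [degreeOp_apply, shift_apply, hv]

theorem degreeOp_vacuum : degreeOp k A m (vacuum A m) = 0 := by
  funext p
  by_cases hp : p.1 = 0 <;> simp [degreeOp_apply, vacuum, hp]

theorem shift_vacuum (p : Set.Iic m) :
    shift k m v a (vacuum A m) p = if v = p.1 then a else 0 := by
  have hiff : v = p.1 ↔ v ≤ p.1 ∧ p.1 - v = 0 := by
    rw [tsub_eq_zero_iff_le, le_antisymm_iff]
  simp [shift_apply, vacuum, hiff, ite_and]

end Shift

section Expansion

/-- The lists of pairs `(b, t)` with `1 ≤ t ≤ N` whose first components form a sublist of `B`. They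
index the terms of `∏_{b ∈ B} ∑_{t ≤ N} f b t` when `f b 0 = 1`. -/
def multiplicityLists {ι : Type*} [DecidableEq ι] (N : ℕ) : List ι → Finset (List (ι × ℕ))
  | [] => {[]}
  | b :: B => multiplicityLists N B ∪
      (Finset.range N ×ˢ multiplicityLists N B).image fun q => (b, q.1 + 1) :: q.2

theorem mem_multiplicityLists {ι : Type*} [DecidableEq ι] {N : ℕ} {B : List ι}
    {L : List (ι × ℕ)} : L ∈ multiplicityLists N B ↔
      (∀ p ∈ L, 1 ≤ p.2 ∧ p.2 ≤ N) ∧ (L.map Prod.fst).Sublist B := by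
  induction B generalizing L with
  | nil => simp +contextual [multiplicityLists]
  | cons b B ih =>
    simp only [multiplicityLists, Finset.mem_union, Finset.mem_image, Finset.mem_product,
      Finset.mem_range, ih, List.sublist_cons_iff, and_or_left, Prod.exists]
    refine or_congr_right ⟨?_, ?_⟩
    · rintro ⟨t, L, ⟨ht, hL, hsub⟩, rfl⟩
      exact ⟨by simpa [Nat.succ_le_iff, ht] using hL, L.map Prod.fst, rfl, hsub⟩
    · rintro ⟨hbL, r, hr, hsub⟩
      obtain ⟨⟨b, t⟩, L, rfl, rfl, rfl⟩ := List.map_eq_cons_iff.1 hr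
      obtain ⟨ht, hL⟩ := List.forall_mem_cons.1 hbL
      obtain ⟨s, rfl⟩ := Nat.exists_eq_add_of_le' ht.1
      exact ⟨s, L, ⟨ht.2, hL, hsub⟩, rfl⟩

theorem prod_sum_range_eq_sum_multiplicityLists {ι R : Type*} [DecidableEq ι] [Semiring R] (N : ℕ)
    {B : List ι} (hB : B.Nodup) {f : ι → ℕ → R} (hf : ∀ b, f b 0 = 1) :
    (B.map fun b => ∑ t ∈ Finset.range (N + 1), f b t).prod =
      ∑ L ∈ multiplicityLists N B, (L.map fun p => f p.1 p.2).prod := by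
  induction B with
  | nil => simp [multiplicityLists]
  | cons b B ih =>
    obtain ⟨hb, hB⟩ := List.nodup_cons.1 hB
    rw [multiplicityLists, Finset.sum_union, Finset.sum_image, Finset.sum_product]
    · rw [List.map_cons, List.prod_cons, ih hB, Finset.sum_range_succ', hf, add_comm, add_mul,
        one_mul, Finset.sum_mul_sum]
      simp
    · rintro ⟨t, L⟩ - ⟨t', L'⟩ - h
      simpa using h
    · simp only [Finset.disjoint_right, Finset.mem_image, forall_exists_index, and_imp]
      rintro _ q - rfl hL
      exact hb ((mem_multiplicityLists.1 hL).2.subset (by simp))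

theorem coe_flatten_replicate {X : Type*} (b : List X) (t : ℕ) :
    ((List.replicate t b).flatten : Multiset X) = t • (b : Multiset X) := by
  induction t with
  | zero => simp
  | succ t ih =>
    rw [List.replicate_succ, List.flatten_cons, ← Multiset.coe_add, ih, succ_nsmul']

variable {X : Type*} [LinearOrder X] {A : Type*} [Ring A]

theorem isGradedBracket_shift {k : Type*} [CommRing k] [Algebra k A] {E : List X → A}
    (hE : IsLyndonBracket E) (m : Multiset X) :
    IsGradedBracket (fun l : List X => shift k m (l : Multiset X) (E l)) (degreeOp k A m)
      m.card where
  isLyndonBracket l b h := by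
    simp only [hE l b h, map_sub, shift_mul_shift, Multiset.coe_add, sub_right_inj]
    rw [← Multiset.coe_add, ← Multiset.coe_add, add_comm]
  eq_zero l hl := shift_eq_zero fun h => hl.not_ge (by simpa using Multiset.card_le_card h)
  isNilpotent l hl := ⟨_, shift_pow_eq_zero (by simpa using hl)⟩
  degree l := by simpa using degreeOp_mul_shift (v := (l : Multiset X))

theorem mem_multiplicityLists_lyndonWords_iff [Finite X] {N : ℕ} {L : List (List X × ℕ)}
    (hN : (spell L).length ≤ N) :
    L ∈ multiplicityLists N (lyndonWords X N) ↔ IsLyndonFactorization L := by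
  rw [mem_multiplicityLists, sublist_lyndonWords_iff, List.pairwise_map, List.forall_mem_map]
  refine ⟨fun ⟨ht, hpairwise, hL⟩ => ⟨fun p hp => (hL p hp).1, fun p hp => (ht p hp).1, hpairwise⟩,
    fun hL => ⟨fun p hp => ⟨hL.pos p hp, ?_⟩, hL.pairwise,
      fun p hp => ⟨hL.isLyndon p hp, ?_⟩⟩⟩
  all_goals refine le_trans ?_ ((mul_length_le_length_spell hp).trans hN)
  · exact Nat.le_mul_of_pos_right _ (List.length_pos_iff.2 (hL.isLyndon p hp).1)
  · exact Nat.le_mul_of_pos_left _ (hL.pos p hp)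

variable {k : Type*} [Field k] [Algebra k A]

/-- The term of the expansion indexed by the list `L` of pairs `(αₘ, tₘ)`:
`∏ (C(αₘ) E(αₘ) / |αₘ|!)^{tₘ} / tₘ!`. -/
def pbwTerm (E : List X → A) (C : List X → k) (L : List (List X × ℕ)) : A :=
  (L.map fun p => (p.2.factorial : k)⁻¹ • (normCoeff C p.1 • E p.1) ^ p.2).prod

theorem prod_shift_eq_shift_spell (m : Multiset X) (E : List X → A) (C : List X → k)
    (L : List (List X × ℕ)) :
    (L.map fun p => shift k m (p.2 • (p.1 : Multiset X))
        ((p.2.factorial : k)⁻¹ • (normCoeff C p.1 • E p.1) ^ p.2)).prod =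
      shift k m (spell L : Multiset X) (pbwTerm E C L) := by
  induction L with
  | nil => simp [pbwTerm, shift_zero_one]
  | cons p L ih =>
    rw [List.map_cons, List.prod_cons, ih, shift_mul_shift, spell_cons, ← Multiset.coe_add,
      coe_flatten_replicate, pbwTerm, pbwTerm, List.map_cons, List.prod_cons]

/-- The component of content `p` of `∏ exp (C(α) E(α) / |α|!)`, the product being taken over all
Lyndon words `α` in decreasing order. -/
noncomputable def pbwSum (E : List X → A) (C : List X → k) (p : Multiset X) : A :=
  ∑ᶠ L ∈ {L : List (List X × ℕ) | IsLyndonFactorization L ∧ (spell L : Multiset X) = p},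
    pbwTerm E C L

theorem pbwSum_zero (E : List X → A) (C : List X → k) : pbwSum E C 0 = 1 := by
  have hset : {L : List (List X × ℕ) | IsLyndonFactorization L ∧ (spell L : Multiset X) = 0} =
      {[]} := by
    ext L
    simp only [Multiset.coe_eq_zero, Set.mem_ofPred_eq, Set.mem_singleton_iff]
    exact ⟨fun ⟨hL, h⟩ => hL.spell_eq_nil_iff.1 h, fun h => h ▸ ⟨.nil, rfl⟩⟩
  rw [pbwSum, hset, finsum_mem_singleton, pbwTerm, List.map_nil, List.prod_nil]

theorem pbwSum_eq_sum [Finite X] (E : List X → A) (C : List X → k) {p : Multiset X} {N : ℕ}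
    (hp : p.card ≤ N) :
    pbwSum E C p = ∑ L ∈ multiplicityLists N (lyndonWords X N) with (spell L : Multiset X) = p,
      pbwTerm E C L := by
  rw [pbwSum, ← finsum_mem_coe_finset]
  refine finsum_mem_congr (Set.ext fun L => ?_) fun _ _ => rfl
  simp only [Set.mem_ofPred_eq, Finset.coe_filter]
  refine and_congr_left ?_
  rintro rfl
  exact (mem_multiplicityLists_lyndonWords_iff hp).symm

section Exponential

open IsNilpotent

variable [Algebra ℚ A]

theorem exp_smul_shift (m : Multiset X) (E : List X → A) (C : List X → k) {b : List X}
    (hb : b ≠ []) :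
    exp (normCoeff C b • shift k m (b : Multiset X) (E b)) =
      ∑ t ∈ Finset.range (m.card + 1), shift k m (t • (b : Multiset X))
        ((t.factorial : k)⁻¹ • (normCoeff C b • E b) ^ t) := by
  rw [← map_smul, exp_eq_sum (shift_pow_eq_zero (by simpa using hb))]
  refine Finset.sum_congr rfl fun t _ => ?_
  rw [shift_pow, map_smul (shift k m _), inv_natCast_smul_eq ℚ k]

theorem prod_exp_vacuum [Finite X] (m : Multiset X) (E : List X → A) (C : List X → k)
    (p : Set.Iic m) :
    ((lyndonWords X m.card).map fun b =>
        exp (normCoeff C b • shift k m (b : Multiset X) (E b))).prod (vacuum A m) p =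
      pbwSum E C p.1 := by
  rw [List.map_congr_left fun b hb => exp_smul_shift m E C (mem_lyndonWords.1 hb).1.1,
    prod_sum_range_eq_sum_multiplicityLists _ (pairwise_lyndonWords.imp ne_of_gt)
      (by simp [shift_zero_one]), pbwSum_eq_sum E C (Multiset.card_le_card p.2),
    Finset.sum_filter]
  simp only [prod_shift_eq_shift_spell, LinearMap.sum_apply, Finset.sum_apply, shift_vacuum]

end Exponential

theorem card_nsmul_pbwSum [CharZero k] [Fintype X] {E : List X → A} (hE : IsLyndonBracket E)
    {C : List X → k} (hC : IsLyndonCoeff C) (m : Multiset X) :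
    m.card • pbwSum E C m =
      ∑ x : X, if x ∈ m then E [x] * pbwSum E C (m.erase x) else 0 := by
  rcases eq_or_ne m 0 with rfl | hm
  · simp
  let _ : Algebra ℚ A := Algebra.compHom A (algebraMap ℚ k)
  have hletters : suffixSum C (fun l : List X => shift k m (l : Multiset X) (E l))
      (lyndonWords X m.card) = ∑ x : X, shift k m {x} (E [x]) := by
    rw [suffixSum, suffixMinimal_lyndonWords (Multiset.card_pos.2 hm),
      Finset.sum_image fun x _ y _ h => by simpa using h]
    simp [normCoeff, hC.singleton]
  have hF := (isGradedBracket_shift (k := k) hE m).sub_suffixSum_mul_prod_exp hC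
    List.suffix_rfl
  have hvacuum := congrFun (LinearMap.congr_fun hF (vacuum A m)) ⟨m, Set.mem_Iic.2 le_rfl⟩
  rw [hletters, Module.End.mul_apply, Module.End.mul_apply, degreeOp_vacuum, map_zero,
    LinearMap.sub_apply, Pi.sub_apply, Pi.zero_apply, sub_eq_zero, degreeOp_apply,
    prod_exp_vacuum, LinearMap.sum_apply, Finset.sum_apply] at hvacuum
  simpa only [shift_apply, prod_exp_vacuum, Multiset.singleton_le, Multiset.sub_singleton]
    using hvacuum

end Expansion

section ShuffleTypePolynomials

theorem SH_eq_factorial_nsmul {A : Type*} [Ring A] {u v : A} {g : ℕ → ℕ → A} (h_zero : g 0 0 = 1)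
    (h_left : ∀ i, (i + 1) • g (i + 1) 0 = u * g i 0)
    (h_right : ∀ j, (j + 1) • g 0 (j + 1) = v * g 0 j)
    (h_both : ∀ i j, (i + 1 + (j + 1)) • g (i + 1) (j + 1) = u * g i (j + 1) + v * g (i + 1) j) :
    ∀ i j, SH u v i j = (i + j).factorial • g i j
  | 0, 0 => by simp [SH, h_zero]
  | i + 1, 0 => by
    rw [SH, SH_eq_factorial_nsmul h_zero h_left h_right h_both, mul_smul_comm, add_zero, add_zero,
      Nat.factorial_succ, mul_comm, mul_smul, h_left]
  | 0, j + 1 => by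
    rw [SH, SH_eq_factorial_nsmul h_zero h_left h_right h_both, mul_smul_comm, zero_add, zero_add,
      Nat.factorial_succ, mul_comm, mul_smul, h_right]
  | i + 1, j + 1 => by
    have hfactorial : (i + 1 + (j + 1)).factorial =
        (i + (j + 1)).factorial * (i + 1 + (j + 1)) := by
      rw [add_right_comm i 1 (j + 1), Nat.factorial_succ, mul_comm]
    rw [SH, SH_eq_factorial_nsmul h_zero h_left h_right h_both,
      SH_eq_factorial_nsmul h_zero h_left h_right h_both, mul_smul_comm, mul_smul_comm,
      add_right_comm i 1 j, add_assoc i j 1, hfactorial, mul_smul, h_both, smul_add]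

variable {A : Type*} [Ring A] {k : Type*} [Field k] [Algebra k A]

theorem SH_eq_factorial_nsmul_pbwSum [CharZero k] {E : List (Fin 2) → A} (hE : IsLyndonBracket E)
    {C : List (Fin 2) → k} (hC : IsLyndonCoeff C) (i j : ℕ) :
    SH (E [1]) (E [0]) i j = (i + j).factorial •
      pbwSum E C (Multiset.replicate i 1 + Multiset.replicate j 0) := by
  refine SH_eq_factorial_nsmul (g := fun i j =>
    pbwSum E C (Multiset.replicate i 1 + Multiset.replicate j 0)) (pbwSum_zero E C) (fun i => ?_)
    (fun j => ?_) (fun i j => ?_) i j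
  · have := card_nsmul_pbwSum hE hC (Multiset.replicate (i + 1) 1)
    simpa [Fin.sum_univ_two, Multiset.mem_replicate, Multiset.replicate_succ] using this
  · have := card_nsmul_pbwSum hE hC (Multiset.replicate (j + 1) 0)
    simpa [Fin.sum_univ_two, Multiset.mem_replicate, Multiset.replicate_succ] using this
  · have := card_nsmul_pbwSum hE hC (Multiset.replicate (i + 1) 1 + Multiset.replicate (j + 1) 0)
    rw [Multiset.card_add, Multiset.card_replicate, Multiset.card_replicate, Fin.sum_univ_two,
      add_comm (ite _ _ _)] at this
    simpa [Multiset.mem_replicate, Multiset.replicate_succ] using this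

theorem pbwTerm_eq_smul {X : Type*} (E : List X → A) (C : List X → k)
    (L : List (List X × ℕ)) :
    pbwTerm E C L = (L.map fun p => (p.2.factorial : k)).prod⁻¹ •
      (L.map fun p => (normCoeff C p.1 • E p.1) ^ p.2).prod := by
  induction L with
  | nil => simp [pbwTerm]
  | cons p L ih =>
    rw [pbwTerm, List.map_cons, List.prod_cons, ← pbwTerm, ih, smul_mul_smul_comm, ← mul_inv]
    simp only [List.map_cons, List.prod_cons]

theorem coe_spell_eq_replicate_add_replicate_iff {L : List (List (Fin 2) × ℕ)} {i j : ℕ} :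
    (spell L : Multiset (Fin 2)) = Multiset.replicate i 1 + Multiset.replicate j 0 ↔
      (L.map fun p => p.2 * p.1.count 1).sum = i ∧ (L.map fun p => p.2 * p.1.count 0).sum = j := by
  rw [← count_spell, ← count_spell, Multiset.ext, Fin.forall_fin_two, and_comm]
  simp [Multiset.count_replicate]

end ShuffleTypePolynomials

theorem stmt_5_general {k A : Type*} [Field k] [CharZero k] [Ring A] [Algebra k A]
    (E : List (Fin 2) → A)
    (hE2 : ∀ αL αR : List (Fin 2), IsLyndon (αL ++ αR) → αL ≠ [] → IsLyndon αR →
      (∀ δ β' : List (Fin 2), αL ++ αR = β' ++ δ → β' ≠ [] → IsLyndon δ →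
        δ.length ≤ αR.length) →
      E (αL ++ αR) = E αL * E αR - E αR * E αL)
    (C : List (Fin 2) → k)
    (hC1 : ∀ x : Fin 2, C [x] = 1)
    (hC2 : ∀ (x : Fin 2) (w : List (Fin 2)) (L : List (List (Fin 2) × ℕ)),
      IsLyndon (x :: w) → w ≠ [] →
      (∀ p ∈ L, IsLyndon p.1 ∧ 1 ≤ p.2) →
      L.IsChain (fun p q => List.Lex (· < ·) q.1 p.1) →
      (L.map fun p => (List.replicate p.2 p.1).flatten).flatten = w →
      C (x :: w) =
        (w.length.factorial : k) /
            (L.map fun p => (p.1.length.factorial : k) ^ p.2 * (p.2.factorial : k)).prod *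
          (L.map fun p => C p.1 ^ p.2).prod)
    (i j : ℕ) :
    SH (E [1]) (E [0]) i j =
      ∑ᶠ L ∈ {L : List (List (Fin 2) × ℕ) |
          (∀ p ∈ L, IsLyndon p.1 ∧ 1 ≤ p.2) ∧
          L.IsChain (fun p q => List.Lex (· < ·) q.1 p.1) ∧
          (L.map fun p => p.2 * p.1.count 1).sum = i ∧
          (L.map fun p => p.2 * p.1.count 0).sum = j},
        (((i + j).factorial : k) / (L.map fun p => (p.2.factorial : k)).prod) •
          (L.map fun p => ((C p.1 / (p.1.length.factorial : k)) • E p.1) ^ p.2).prod := by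
  have hE : IsLyndonBracket E := fun l b h =>
    hE2 l b h.isLyndon_append h.left.1 h.right fun _ _ => h.length_le_of_isLyndon
  have hC : IsLyndonCoeff C := ⟨hC1, fun x w L hx hw hL hspell =>
    have ⟨hLyndon, hchain⟩ := isLyndonFactorization_iff.1 hL
    hC2 x w L hx hw hLyndon hchain hspell⟩
  rw [SH_eq_factorial_nsmul_pbwSum hE hC, ← Nat.cast_smul_eq_nsmul k, pbwSum]
  simp only [smul_finsum]
  refine finsum_mem_congr (Set.ext fun L => ?_) fun L _ => ?_
  · rw [Set.mem_ofPred_eq, Set.mem_ofPred_eq, isLyndonFactorization_iff,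
      coe_spell_eq_replicate_add_replicate_iff, and_assoc]
  · rw [pbwTerm_eq_smul, smul_smul, ← div_eq_mul_inv]
    rfl

/-- Theorem A / Corollary `cor:noncomm-binom-thm-LSbasis` of the paper:
expansion of the shuffle type polynomials `SH_{i,j}(E(2),E(1))` in the
Lyndon–Shirshov PBW basis. Here the alphabet is `Fin 2` (letter `1` is `0`,
letter `2` is `1`), `E` is the Lyndon–Shirshov basis and `C` the coefficient
function, both characterized by the stated hypotheses.  The sum runs over all
finite nonincreasing families of Lyndon words with positive multiplicities,
encoded as lists of pairs `(α, t)` with strictly decreasing `α`'s. -/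
theorem stmt_5 (k : Type*) [Field k] [CharZero k]
    (E : List (Fin 2) → FreeAlgebra k (Fin 2))
    (hE1 : ∀ x : Fin 2, E [x] = FreeAlgebra.ι k x)
    (hE2 : ∀ αL αR : List (Fin 2), IsLyndon (αL ++ αR) → αL ≠ [] → IsLyndon αR →
      (∀ δ β' : List (Fin 2), αL ++ αR = β' ++ δ → β' ≠ [] → IsLyndon δ →
        δ.length ≤ αR.length) →
      E (αL ++ αR) = E αL * E αR - E αR * E αL)
    (C : List (Fin 2) → k)
    (hC1 : ∀ x : Fin 2, C [x] = 1)
    (hC2 : ∀ (x : Fin 2) (w : List (Fin 2)) (L : List (List (Fin 2) × ℕ)),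
      IsLyndon (x :: w) → w ≠ [] →
      (∀ p ∈ L, IsLyndon p.1 ∧ 1 ≤ p.2) →
      L.Chain' (fun p q => List.Lex (· < ·) q.1 p.1) →
      (L.map fun p => (List.replicate p.2 p.1).flatten).flatten = w →
      C (x :: w) =
        (w.length.factorial : k) /
            (L.map fun p => (p.1.length.factorial : k) ^ p.2 * (p.2.factorial : k)).prod *
          (L.map fun p => C p.1 ^ p.2).prod)
    (i j : ℕ) :
    SH (E [1]) (E [0]) i j =
      ∑ᶠ L ∈ {L : List (List (Fin 2) × ℕ) |
          (∀ p ∈ L, IsLyndon p.1 ∧ 1 ≤ p.2) ∧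
          L.Chain' (fun p q => List.Lex (· < ·) q.1 p.1) ∧
          (L.map fun p => p.2 * p.1.count 1).sum = i ∧
          (L.map fun p => p.2 * p.1.count 0).sum = j},
        (((i + j).factorial : k) / (L.map fun p => (p.2.factorial : k)).prod) •
          (L.map fun p => ((C p.1 / (p.1.length.factorial : k)) • E p.1) ^ p.2).prod :=
  stmt_5_general E hE2 C hC1 hC2 i j
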